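/- If C is a rigid, contravariantly finite subcategory of T that is closed under direct summands, then (C, C^⊥1) is a cotorsion pair in T. -/

import Mathlib

/-!
The proof is a triangulated form of Wakamatsu's lemma. If `V ⟶ U ⟶ B ⟶ V⟦1⟧` is a triangle in which
`U ⟶ B` is a right `C`-approximation, then for `X` in `C` the exact sequence
`Hom(X, U) ⟶ Hom(X, B) ⟶ Hom(X, V⟦1⟧) ⟶ Hom(X, U⟦1⟧) = 0` has a surjective first map, so
`Hom(X, V⟦1⟧) = 0`, that is, `V` lies in `C^⊥1`; minimality of the approximation plays no role.
Applied to an approximation of `B` this yields the first triangle of a cotorsion pair, and applied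
to an approximation of `B⟦1⟧` it yields, after a rotation, the second one.
-/

open CategoryTheory CategoryTheory.Limits CategoryTheory.Pretriangulated

attribute [local instance] CategoryTheory.Limits.hasBinaryBiproducts_of_finite_biproducts

universe v u

namespace ClusterPaper

variable {T : Type u} [Category.{v} T] [Preadditive T] [HasZeroObject T]
  [HasShift T ℤ] [∀ n : ℤ, (shiftFunctor T n).Additive] [Pretriangulated T]
  [HasFiniteBiproducts T]

/-- `X` is a direct summand of `Z`. -/
def IsSummand (X Z : T) : Prop :=
  ∃ (s : X ⟶ Z) (r : Z ⟶ X), s ≫ r = 𝟙 X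

/-- The category is Krull–Schmidt: every object is a finite direct sum of objects
whose endomorphism rings are local. -/
def IsKrullSchmidt : Prop :=
  ∀ X : T, ∃ (n : ℕ) (f : Fin n → T),
    Nonempty (X ≅ ⨁ f) ∧ ∀ i, IsLocalRing (End (f i))

/-- A class of objects is closed under isomorphisms. -/
def IsoClosed (P : T → Prop) : Prop := ∀ ⦃X Y : T⦄, (X ≅ Y) → P X → P Y

/-- A class of objects is closed under finite direct sums. -/
def SumClosed (P : T → Prop) : Prop :=
  ∀ ⦃X Y : T⦄, P X → P Y → P (X ⊞ Y)

/-- A class of objects is closed under direct summands. -/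
def SummandClosed (P : T → Prop) : Prop := ∀ ⦃X Z : T⦄, IsSummand X Z → P Z → P X

/-- `Hom(X, Y[1]) = 0`, i.e. `E(X,Y) = 0` for the extriangulated structure on a
triangulated category. -/
def Ext1Zero (X Y : T) : Prop := ∀ f : X ⟶ Y⟦(1 : ℤ)⟧, f = 0

/-- The right perpendicular category `P^⊥1`. -/
def rightPerp (P : T → Prop) : T → Prop := fun X => ∀ ⦃C : T⦄, P C → Ext1Zero C X

/-- The left perpendicular category `^⊥1 P`. -/
def leftPerp (P : T → Prop) : T → Prop := fun X => ∀ ⦃C : T⦄, P C → Ext1Zero X C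

/-- A cotorsion pair `(U, V)`. -/
structure CotorsionPair (U V : T → Prop) : Prop where
  summandClosed_fst : SummandClosed U
  summandClosed_snd : SummandClosed V
  ext_zero : ∀ ⦃X Y : T⦄, U X → V Y → Ext1Zero X Y
  tri_left : ∀ B : T, ∃ (VB UB : T) (f : VB ⟶ UB) (g : UB ⟶ B) (h : B ⟶ VB⟦(1 : ℤ)⟧),
    V VB ∧ U UB ∧ Triangle.mk f g h ∈ distTriang T
  tri_right : ∀ B : T, ∃ (VB UB : T) (f : B ⟶ VB) (g : VB ⟶ UB) (h : UB ⟶ B⟦(1 : ℤ)⟧),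
    V VB ∧ U UB ∧ Triangle.mk f g h ∈ distTriang T

/-- `f : C₀ ⟶ X` is a right `P`-approximation of `X`. -/
def IsRightApprox (P : T → Prop) {C₀ X : T} (f : C₀ ⟶ X) : Prop :=
  ∀ ⦃C' : T⦄, P C' → ∀ g : C' ⟶ X, ∃ h : C' ⟶ C₀, h ≫ f = g

/-- `f : X ⟶ C₀` is a left `P`-approximation of `X`. -/
def IsLeftApprox (P : T → Prop) {X C₀ : T} (f : X ⟶ C₀) : Prop :=
  ∀ ⦃C' : T⦄, P C' → ∀ g : X ⟶ C', ∃ h : C₀ ⟶ C', f ≫ h = g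

/-- Every object admits a right `P`-approximation. -/
def ContravariantlyFinite (P : T → Prop) : Prop :=
  ∀ X : T, ∃ (C₀ : T) (f : C₀ ⟶ X), P C₀ ∧ IsRightApprox P f

/-- Every object admits a left `P`-approximation. -/
def CovariantlyFinite (P : T → Prop) : Prop :=
  ∀ X : T, ∃ (C₀ : T) (f : X ⟶ C₀), P C₀ ∧ IsLeftApprox P f

/-- A pre-cluster tilting subcategory. -/
structure PreClusterTilting (C : T → Prop) : Prop where
  sumClosed : SumClosed C
  summandClosed : SummandClosed C
  rigid : ∀ ⦃X Y : T⦄, C X → C Y → Ext1Zero X Y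
  contravariantlyFinite : ContravariantlyFinite C
  covariantlyFinite : CovariantlyFinite C
  perp_eq : rightPerp C = leftPerp C

/-- A cluster tilting subcategory. -/
structure ClusterTilting (C : T → Prop) extends PreClusterTilting C : Prop where
  eq_rightPerp : C = rightPerp C
  eq_leftPerp : C = leftPerp C

/-- `f` factors through an object of `D`. -/
def FactorsThru (D : T → Prop) {X Y : T} (f : X ⟶ Y) : Prop :=
  ∃ (Z : T) (g : X ⟶ Z) (h : Z ⟶ Y), D Z ∧ g ≫ h = f

/-- The hom relation identifying two morphisms whose difference factors through `D`. -/
def quotRel (D : T → Prop) : HomRel T := fun {X Y} f g => FactorsThru D (f - g)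

/-- The additive quotient category `T/D`. -/
abbrev QuotCat (D : T → Prop) := CategoryTheory.Quotient (quotRel D)

/-- A category is abelian (as a property): it admits an abelian structure. -/
def IsAbelian (A : Type*) [Category A] : Prop := Nonempty (Abelian A)

/-- An object is indecomposable: it is nonzero, and in any direct sum
decomposition one summand is zero. -/
def Indec (X : T) : Prop :=
  ¬ IsZero X ∧ ∀ (Y Z : T), (X ≅ Y ⊞ Z) → IsZero Y ∨ IsZero Z

/-- `X ∈ CoCone(P, Q)`: there is a triangle `X → B → C' → X[1]` with `B ∈ P`, `C' ∈ Q`. -/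
def CoCone (P Q : T → Prop) : T → Prop := fun X =>
  ∃ (B C' : T) (f : X ⟶ B) (g : B ⟶ C') (h : C' ⟶ X⟦(1 : ℤ)⟧),
    P B ∧ Q C' ∧ Triangle.mk f g h ∈ distTriang T

/-- `Y ∈ Cone(P, Q)`: there is a triangle `A → B → Y → A[1]` with `A ∈ P`, `B ∈ Q`. -/
def Cone (P Q : T → Prop) : T → Prop := fun Y =>
  ∃ (A B : T) (f : A ⟶ B) (g : B ⟶ Y) (h : Y ⟶ A⟦(1 : ℤ)⟧),
    P A ∧ Q B ∧ Triangle.mk f g h ∈ distTriang T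

/-- `U + V`: objects isomorphic to a direct sum of an object of `U` and an object of `V`. -/
def plusCat (U V : T → Prop) : T → Prop := fun X =>
  ∃ (A B : T), U A ∧ V B ∧ Nonempty (X ≅ A ⊞ B)

/-- A class of objects is closed under extensions. -/
def ExtClosed (P : T → Prop) : Prop :=
  ∀ ⦃A B C' : T⦄ (f : A ⟶ B) (g : B ⟶ C') (h : C' ⟶ A⟦(1 : ℤ)⟧),
    (Triangle.mk f g h ∈ distTriang T) → P A → P C' → P B

/-- The triangulated category `T` is connected: it is not the direct sum of two
nonzero triangulated (iso-closed, summand-closed, extension-closed, mutually Hom-orthogonal)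
subcategories. -/
def ConnectedCat : Prop :=
  ¬ ∃ (T₁ T₂ : T → Prop),
    IsoClosed T₁ ∧ IsoClosed T₂ ∧ SummandClosed T₁ ∧ SummandClosed T₂ ∧
    ExtClosed T₁ ∧ ExtClosed T₂ ∧
    (∃ X, T₁ X ∧ ¬ IsZero X) ∧ (∃ X, T₂ X ∧ ¬ IsZero X) ∧
    (∀ X : T, ∃ (A B : T), T₁ A ∧ T₂ B ∧ Nonempty (X ≅ A ⊞ B)) ∧
    (∀ ⦃X Y : T⦄, T₁ X → T₂ Y → ∀ f : X ⟶ Y, f = 0) ∧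
    (∀ ⦃X Y : T⦄, T₂ X → T₁ Y → ∀ f : X ⟶ Y, f = 0)

/-- Wakamatsu-type lemma: if the second morphism of a triangle is a right `C`-approximation
by an object of `C` and `C` is rigid, then the first object lies in `C^⊥1`. -/
theorem rightPerp_of_isRightApprox (C : T → Prop)
    (hrigid : ∀ ⦃X Y : T⦄, C X → C Y → Ext1Zero X Y)
    {V U B : T} (f : V ⟶ U) (g : U ⟶ B) (h : B ⟶ V⟦(1 : ℤ)⟧)
    (hT : Triangle.mk f g h ∈ distTriang T) (hU : C U) (hg : IsRightApprox C g) :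
    rightPerp C V := by
  intro X hX φ
  obtain ⟨a, ha⟩ : ∃ a : X ⟶ B, φ = a ≫ h :=
    Triangle.coyoneda_exact₁ _ hT φ (hrigid hX hU _)
  obtain ⟨b, hb⟩ := hg hX a
  have hgh : g ≫ h = 0 := comp_distTriang_mor_zero₂₃ _ hT
  rw [ha, ← hb, Category.assoc, hgh, comp_zero]

theorem rightPerp_summandClosed (C : T → Prop) : SummandClosed (rightPerp C) := by
  rintro X Z ⟨s, r, hsr⟩ hZ Y hY φ
  have h0 : φ ≫ s⟦(1 : ℤ)⟧' = 0 := hZ hY _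
  have h1 : s⟦(1 : ℤ)⟧' ≫ r⟦(1 : ℤ)⟧' = 𝟙 (X⟦(1 : ℤ)⟧) := by
    rw [← Functor.map_comp, hsr, CategoryTheory.Functor.map_id]
  rw [← Category.comp_id φ, ← h1, ← Category.assoc, h0, zero_comp]

/-- If `C` is rigid, contravariantly finite and closed under direct summands,
then `(C, C^⊥1)` is a cotorsion pair in `T`. -/
theorem stmt3 [IsTriangulated T] (hKS : IsKrullSchmidt (T := T))
    (C : T → Prop) (hCiso : IsoClosed C) (hCsum : SumClosed C) (hCsummand : SummandClosed C)
    (hrigid : ∀ ⦃X Y : T⦄, C X → C Y → Ext1Zero X Y)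
    (hcontra : ContravariantlyFinite C) :
    CotorsionPair C (rightPerp C) := by
  exact {
    summandClosed_fst := hCsummand
    summandClosed_snd := rightPerp_summandClosed C
    ext_zero := fun _ _ hX hY => hY hX
    tri_left := by
      intro B
      obtain ⟨U, g, hU, hg⟩ := hcontra B
      obtain ⟨V, f, h, hT⟩ := distinguished_cocone_triangle₁ g
      exact ⟨V, U, f, g, h, rightPerp_of_isRightApprox C hrigid f g h hT hU hg, hU, hT⟩
    tri_right := by
      intro B
      obtain ⟨U, h, hU, hh⟩ := hcontra (B⟦(1 : ℤ)⟧)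
      obtain ⟨V, f, g, hT⟩ := distinguished_cocone_triangle₂ h
      exact ⟨V, U, f, g, h,
        rightPerp_of_isRightApprox C hrigid g h _ (rot_of_distTriang _ hT) hU hh, hU, hT⟩
  }

end ClusterPaper
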